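/- Let t >= 2 and n = 2t+2. Then every colouring f of H_n with t_f = t satisfies winst(f) >= t+3, and every colouring f of H_n that respects B_t(0^n) and B_t(1^n) satisfies inst(f) >= t+3; that is, inst(2t+2, t) >= winst(2t+2, t) >= t+3. -/

import Mathlib

/-!
Put `m = t + 1`, so that `n = 2m`. A colouring respecting the two balls of radius `t` is `0` below
the middle level `m` and `1` above it; only its values on the middle level are free.

An enumeration `e : Fin m × Bool ≃ Fin (2m)` of the coordinates gives a chain `y_0, ..., y_m` of
middle points: `y_0` is `1` exactly on the coordinates `e (j, true)`, and `y_{k+1}` comes from `y_k`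
by flipping both `e (k, true)` and `e (k, false)`. The two flips may be done in either order. Going
first to the neighbour above if `f y_k = 0`, and below if `f y_k = 1`, makes the first flip a jump,
and the second one is then a jump iff `f y_k = f y_{k+1}`. The resulting geodesic from `y_0` to
`y_m` has `m + #{k : f y_k = f y_{k+1}}` jumps (`exists_geodesic`). Hence it suffices to find a
chain with two monochromatic steps. Such a chain may be reversed (`revEnum`), and either it or its
reverse ends well.

The two steps are found among the first three pairs of coordinates (`exists_two_mono`), that is, in
the middle level of the 6-cube, as follows. Suppose no chain has two monochromatic steps. If
`u = 123` and `v = 124` had the same colour `c`, the chains `v, u, 3ij, 356` with `i ∈ {1, 2}` and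
`j ∈ {5, 6}` show that every `3ij` has the colour opposite to `c`; but then the chain
`315, 316, 326, 246` has two monochromatic steps. So no two adjacent points have the same colour,
which is impossible for two colours in the triangle `123, 124, 125`.
-/

open Finset

/-- The number of entries of a point of the hypercube equal to `1` (`true`). -/
def onesCount {n : ℕ} (x : Fin n → Bool) : ℕ :=
  (univ.filter fun i => x i = true).card

/-- The number of entries of a point of the hypercube equal to `0` (`false`). -/
def zerosCount {n : ℕ} (x : Fin n → Bool) : ℕ :=
  (univ.filter fun i => x i = false).card

/-- `P` is a geodesic in the `n`-hypercube: consecutive points differ in exactly one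
entry, and each of the `n` entries changes at exactly one step. -/
def IsGeodesic {n : ℕ} (P : Fin (n+1) → Fin n → Bool) : Prop :=
  ∃ σ : Equiv.Perm (Fin n), ∀ j : Fin n, ∀ ℓ : Fin n,
    P j.succ ℓ = if σ ℓ = j then !(P j.castSucc ℓ) else P j.castSucc ℓ

/-- The number of jumps of the geodesic `P` in the colouring `f`. -/
def jumps {n : ℕ} (f : (Fin n → Bool) → Bool) (P : Fin (n+1) → Fin n → Bool) : ℕ :=
  (univ.filter fun j : Fin n => f (P j.succ) ≠ f (P j.castSucc)).card

/-- `inst f` is the maximum of `jumps f P` over all geodesics `P`. -/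
noncomputable def inst {n : ℕ} (f : (Fin n → Bool) → Bool) : ℕ :=
  sSup {m | ∃ P : Fin (n+1) → Fin n → Bool, IsGeodesic P ∧ m = jumps f P}

/-- `f` respects the balls `B_t(0^n)` and `B_t(1^n)`: it is `0` on all points with at
most `t` ones and `1` on all points with at most `t` zeros. -/
def Respects {n : ℕ} (t : ℕ) (f : (Fin n → Bool) → Bool) : Prop :=
  (∀ x, onesCount x ≤ t → f x = false) ∧ (∀ x, zerosCount x ≤ t → f x = true)

/-- `t_f = t`: `t` is the largest radius whose balls `f` respects. -/
def tfEq {n : ℕ} (f : (Fin n → Bool) → Bool) (t : ℕ) : Prop :=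
  Respects t f ∧ ¬ Respects (t+1) f

/-- `winst t f`: the maximum number of jumps of `f` over all well-ending
`(t+1)`-geodesics (those starting with exactly `t+1` ones, whose first point has
colour `1` or whose last point has colour `0`). -/
noncomputable def winst {n : ℕ} (t : ℕ) (f : (Fin n → Bool) → Bool) : ℕ :=
  sSup {m | ∃ P : Fin (n+1) → Fin n → Bool, IsGeodesic P ∧ onesCount (P 0) = t + 1 ∧
    (f (P 0) = true ∨ f (P (Fin.last n)) = false) ∧ m = jumps f P}

/-! ### The six-dimensional case -/

/-- The `k`-th point of the chain in the middle level of the 6-cube given by the relabelling `τ` of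
its coordinates `Fin 3 × Bool`: before relabelling, the chain starts from the point that is `1` on
the coordinates `(j, true)`, and its `k`-th point has the pairs `j < k` flipped. -/
def cubeMid (τ : Equiv.Perm (Fin 3 × Bool)) (k : ℕ) : Fin 3 × Bool → Bool :=
  fun q => if ((τ.symm q).1 : ℕ) < k then !(τ.symm q).2 else (τ.symm q).2

/-- At least two of the three steps of a chain of four colours are monochromatic. -/
def TwoMono (c : ℕ → Bool) : Prop :=
  (c 0 = c 1 ∧ c 1 = c 2) ∨ (c 0 = c 1 ∧ c 2 = c 3) ∨ (c 1 = c 2 ∧ c 2 = c 3)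

theorem cubeMid_mul (τ ρ : Equiv.Perm (Fin 3 × Bool)) (k : ℕ) :
    cubeMid (τ * ρ) k = cubeMid ρ k ∘ τ.symm := rfl

set_option maxRecDepth 4000 in
/-- If no chain has two monochromatic steps, then no chain starts with a monochromatic step. -/
theorem cube_first_ne (g : (Fin 3 × Bool → Bool) → Bool)
    (H : ∀ τ, ¬ TwoMono fun k => g (cubeMid τ k)) (τ : Equiv.Perm (Fin 3 × Bool)) :
    g (cubeMid τ 0) ≠ g (cubeMid τ 1) := by
  intro h
  -- In the labelling `1 = (1, true)`, `2 = (2, true)`, `4 = (0, true)`, `3 = (0, false)`,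
  -- `5 = (1, false)`, `6 = (2, false)`, the first three chains are `124, 123, 3ij, 356` and
  -- the last one is `315, 316, 326, 246`.
  let r1 : Equiv.Perm (Fin 3 × Bool) := Equiv.swap (1, true) (2, true)
  let r2 : Equiv.Perm (Fin 3 × Bool) := r1 * Equiv.swap (1, false) (2, false)
  let r3 : Equiv.Perm (Fin 3 × Bool) := Equiv.swap (1, false) (2, false)
  let r4 : Equiv.Perm (Fin 3 × Bool) :=
    ⟨fun p => match p with
      | (0, true) => (1, false) | (0, false) => (2, false)
      | (1, true) => (1, true) | (1, false) => (2, true)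
      | (2, true) => (0, false) | (2, false) => (0, true),
     fun p => match p with
      | (1, false) => (0, true) | (2, false) => (0, false)
      | (1, true) => (1, true) | (2, true) => (1, false)
      | (0, false) => (2, true) | (0, true) => (2, false),
     by decide, by decide⟩
  have a0 : ∀ r ∈ [r1, r2, r3], cubeMid r 0 = cubeMid 1 0 := by decide
  have a1 : ∀ r ∈ [r1, r2, r3], cubeMid r 1 = cubeMid 1 1 := by decide
  have b0 : cubeMid r4 0 = cubeMid r1 2 := by decide
  have b1 : cubeMid r4 1 = cubeMid r2 2 := by decide
  have b2 : cubeMid r4 2 = cubeMid r3 2 := by decide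
  have h1 := H (τ * r1)
  have h2 := H (τ * r2)
  have h3 := H (τ * r3)
  have h4 := H (τ * r4)
  have h' : g (cubeMid 1 0 ∘ τ.symm) = g (cubeMid 1 1 ∘ τ.symm) := h
  simp only [TwoMono, cubeMid_mul, b0, b1, b2, a0 r1 (by simp), a0 r2 (by simp), a0 r3 (by simp),
    a1 r1 (by simp), a1 r2 (by simp), a1 r3 (by simp)] at h1 h2 h3 h4
  rw [h'] at h1 h2 h3
  clear_value r1 r2 r3 r4
  clear a0 a1 b0 b1 b2 h h' H
  generalize g (cubeMid r1 2 ∘ τ.symm) = x₁ at *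
  generalize g (cubeMid r2 2 ∘ τ.symm) = x₂ at *
  generalize g (cubeMid r3 2 ∘ τ.symm) = x₃ at *
  generalize g (cubeMid 1 1 ∘ τ.symm) = c at *
  cases c <;> cases x₁ <;> cases x₂ <;> cases x₃ <;> simp at h1 h2 h3 h4

theorem cube_exists (g : (Fin 3 × Bool → Bool) → Bool) :
    ∃ τ, TwoMono fun k => g (cubeMid τ k) := by
  by_contra! H
  -- The three edges of a triangle of pairwise adjacent middle points.
  let s : Equiv.Perm (Fin 3 × Bool) := Equiv.swap (0, false) (1, false)
  let s' : Equiv.Perm (Fin 3 × Bool) := s * Equiv.swap (0, true) (1, false)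
  have e1 : cubeMid s 0 = cubeMid 1 0 := by decide
  have e2 : cubeMid s' 0 = cubeMid 1 1 := by decide
  have e3 : cubeMid s' 1 = cubeMid s 1 := by decide
  have h1 := cube_first_ne g H 1
  have h2 := cube_first_ne g H s
  have h3 := cube_first_ne g H s'
  rw [e1] at h2
  rw [e2, e3] at h3
  exact h3 ((Bool.eq_not.2 h1.symm).trans (Bool.eq_not.2 h2.symm).symm)

/-! ### Chains of middle points -/

section Chains

variable {t : ℕ}

/-- The `k`-th point of the chain of middle points given by the enumeration `e` of the coordinates:
the starting point is `1` on the coordinates `e (j, true)`, and the pairs `j < k` are flipped. -/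
def mid (e : Fin (t + 1) × Bool ≃ Fin (2 * t + 2)) (k : ℕ) : Fin (2 * t + 2) → Bool :=
  fun i => if ((e.symm i).1 : ℕ) < k then !(e.symm i).2 else (e.symm i).2

/-- Some chain has two monochromatic steps, found by permuting only the first three pairs of
coordinates of a fixed enumeration. -/
theorem exists_two_mono (ht : 2 ≤ t) (f : (Fin (2 * t + 2) → Bool) → Bool) :
    ∃ e : Fin (t + 1) × Bool ≃ Fin (2 * t + 2), TwoMono fun k => f (mid e k) := by
  let e₀ : Fin (t + 1) × Bool ≃ Fin (2 * t + 2) := Fintype.equivOfCardEq (by simp; omega)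
  let emb : Fin 3 × Bool ↪ Fin (t + 1) × Bool :=
    ⟨fun q => (Fin.castLE (by omega) q.1, q.2), fun a b h => by
      simpa [Prod.ext_iff, Fin.ext_iff] using h⟩
  let ext : (Fin 3 × Bool → Bool) → (Fin (2 * t + 2) → Bool) := fun s i =>
    if h : ((e₀.symm i).1 : ℕ) < 3 then s (⟨(e₀.symm i).1, h⟩, (e₀.symm i).2) else (e₀.symm i).2
  obtain ⟨τ, hτ⟩ := cube_exists fun s => f (ext s)
  let T : Equiv.Perm (Fin (t + 1) × Bool) := τ.viaFintypeEmbedding emb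
  have key : ∀ k ≤ 3, mid (T.trans e₀) k = ext (cubeMid τ k) := by
    intro k hk
    funext i
    obtain ⟨p, rfl⟩ := (T.trans e₀).surjective i
    by_cases hp : p ∈ Set.range emb
    · obtain ⟨q, rfl⟩ := hp
      have hT : T (emb q) = emb (τ q) := Equiv.Perm.viaFintypeEmbedding_apply_image ..
      have h1 : mid (T.trans e₀) k ((T.trans e₀) (emb q)) = if (q.1 : ℕ) < k then !q.2 else q.2 := by
        simp only [mid, Equiv.symm_apply_apply]
        rfl
      rw [h1, Equiv.trans_apply, hT]
      have h2 : ext (cubeMid τ k) (e₀ (emb (τ q))) = cubeMid τ k (τ q) := by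
        have hlt : (((e₀.symm (e₀ (emb (τ q)))).1 : ℕ)) < 3 := by
          rw [Equiv.symm_apply_apply]
          exact (τ q).1.isLt
        simp only [ext, dif_pos hlt]
        congr 1
        simp only [Equiv.symm_apply_apply]
        rfl
      rw [h2]
      simp [cubeMid]
    · have hT : T p = p := Equiv.Perm.viaFintypeEmbedding_apply_notMem_range _ _ hp
      have hp3 : ¬ ((p.1 : ℕ) < 3) := fun h => hp ⟨(⟨p.1, h⟩, p.2), rfl⟩
      have h1 : mid (T.trans e₀) k ((T.trans e₀) p) = p.2 := by
        simp only [mid, Equiv.symm_apply_apply]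
        rw [if_neg (by omega)]
      rw [h1, Equiv.trans_apply, hT]
      simp [ext, hp3]
  refine ⟨T.trans e₀, ?_⟩
  simpa only [TwoMono, key 0 (by omega), key 1 (by omega), key 2 (by omega), key 3 (by omega)]
    using hτ

/-- The enumeration whose chain is the reversed chain of `e`. -/
def revEnum (e : Fin (t + 1) × Bool ≃ Fin (2 * t + 2)) : Fin (t + 1) × Bool ≃ Fin (2 * t + 2) :=
  (Equiv.prodCongr Fin.revPerm Equiv.boolNot).trans e

theorem mid_revEnum (e : Fin (t + 1) × Bool ≃ Fin (2 * t + 2)) (k : ℕ) (hk : k ≤ t + 1) :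
    mid (revEnum e) k = mid e (t + 1 - k) := by
  funext i
  obtain ⟨⟨j, b⟩, rfl⟩ := e.surjective i
  have h : (revEnum e).symm (e (j, b)) = (j.rev, !b) := by
    simp [revEnum]
  simp only [mid, h, Equiv.symm_apply_apply, Fin.val_rev, Bool.not_not]
  have := j.isLt
  split_ifs <;> first | rfl | omega

/-! ### The zigzag geodesic along a chain -/

/-- The time at which a coordinate is flipped: the pair `k` is flipped at the times `2k` and
`2k + 1`, the coordinate `(k, c k)` first. -/
def slot (c : Fin (t + 1) → Bool) (p : Fin (t + 1) × Bool) : Fin (2 * t + 2) :=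
  ⟨2 * p.1 + if p.2 = c p.1 then 0 else 1, by have := p.1.isLt; split_ifs <;> omega⟩

theorem slot_bijective (c : Fin (t + 1) → Bool) : Function.Bijective (slot c) := by
  rw [Fintype.bijective_iff_injective_and_card]
  refine ⟨?_, by simp; omega⟩
  rintro ⟨j, b⟩ ⟨j', b'⟩ h
  simp only [slot, Fin.mk.injEq] at h
  have hj : j = j' := by
    apply Fin.ext
    split_ifs at h <;> omega
  subst hj
  have : b = b' := by
    cases b <;> cases b' <;> cases hc : c j <;> simp [hc] at h ⊢
  rw [this]

/-- The walk which starts from `mid e 0` and flips each coordinate at the time given by `slot c`. -/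
def zig (e : Fin (t + 1) × Bool ≃ Fin (2 * t + 2)) (c : Fin (t + 1) → Bool) (j : ℕ) :
    Fin (2 * t + 2) → Bool :=
  fun i => if (slot c (e.symm i) : ℕ) < j then !(e.symm i).2 else (e.symm i).2

theorem zig_isGeodesic (e : Fin (t + 1) × Bool ≃ Fin (2 * t + 2)) (c : Fin (t + 1) → Bool) :
    IsGeodesic (fun j : Fin (2 * t + 2 + 1) => zig e c j) := by
  refine ⟨e.symm.trans (Equiv.ofBijective _ (slot_bijective c)), fun j i => ?_⟩
  simp only [zig, Equiv.trans_apply, Equiv.ofBijective_apply, Fin.val_succ, Fin.val_castSucc,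
    Fin.ext_iff]
  split_ifs <;> first | rfl | omega

theorem zig_even (e : Fin (t + 1) × Bool ≃ Fin (2 * t + 2)) (c : Fin (t + 1) → Bool) (k : ℕ) :
    zig e c (2 * k) = mid e k := by
  funext i
  simp only [zig, mid, slot]
  split_ifs <;> first | rfl | omega

theorem onesCount_eq_sum (e : Fin (t + 1) × Bool ≃ Fin (2 * t + 2)) (x : Fin (2 * t + 2) → Bool) :
    onesCount x = ∑ j, ((if x (e (j, true)) = true then 1 else 0) +
      (if x (e (j, false)) = true then 1 else 0)) := by
  rw [onesCount, Finset.card_filter, ← e.sum_comp, Fintype.sum_prod_type]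
  simp only [Fintype.sum_bool]

theorem onesCount_add_zerosCount {n : ℕ} (x : Fin n → Bool) : onesCount x + zerosCount x = n := by
  have h := Finset.card_filter_add_card_filter_not (s := (univ : Finset (Fin n)))
    (fun i => x i = true)
  simpa [onesCount, zerosCount] using h

theorem onesCount_mid (e : Fin (t + 1) × Bool ≃ Fin (2 * t + 2)) (k : ℕ) :
    onesCount (mid e k) = t + 1 := by
  rw [onesCount_eq_sum e]
  have : ∀ j : Fin (t + 1), ((if mid e k (e (j, true)) = true then 1 else 0) +
      (if mid e k (e (j, false)) = true then 1 else 0)) = 1 := by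
    intro j
    by_cases h : (j : ℕ) < k <;> simp [mid, h]
  simp [this]

theorem onesCount_zig_odd (e : Fin (t + 1) × Bool ≃ Fin (2 * t + 2)) (c : Fin (t + 1) → Bool)
    (k : Fin (t + 1)) : onesCount (zig e c (2 * k + 1)) = (if c k = true then 0 else 2) + t := by
  rw [onesCount_eq_sum e, ← Finset.add_sum_erase _ _ (Finset.mem_univ k)]
  congr 1
  · cases h : c k <;> simp [zig, slot, h]
  · rw [Finset.sum_congr rfl (g := fun _ => 1)]
    · simp
    · intro j hj
      have hj : (j : ℕ) ≠ k := fun h => Finset.ne_of_mem_erase hj (Fin.ext h)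
      by_cases h : (j : ℕ) < k
      · have h1 (b : Bool) : 2 * (j : ℕ) + (if b = c j then 0 else 1) < 2 * k + 1 := by
          split_ifs <;> omega
        simp only [zig, slot, Equiv.symm_apply_apply, h1]
        simp
      · have h1 (b : Bool) : ¬ 2 * (j : ℕ) + (if b = c j then 0 else 1) < 2 * k + 1 := by
          split_ifs <;> omega
        simp only [zig, slot, Equiv.symm_apply_apply, h1]
        simp

/-- If each pair of flips starts with the one chosen by the colour of the current middle point, then
every middle point is followed by a point of the other colour. -/
theorem zig_odd_colour {f : (Fin (2 * t + 2) → Bool) → Bool} (hf : Respects t f)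
    (e : Fin (t + 1) × Bool ≃ Fin (2 * t + 2)) (k : Fin (t + 1)) :
    f (zig e (fun k => f (mid e k)) (2 * k + 1)) = !f (mid e k) := by
  have h1 := onesCount_zig_odd e (fun k => f (mid e k)) k
  have h2 := onesCount_add_zerosCount (zig e (fun k => f (mid e k)) (2 * k + 1))
  cases h : f (mid e k)
  · simp only [h] at h1
    exact hf.2 _ (by simp at h1; omega)
  · simp only [h] at h1
    exact hf.1 _ (by simp at h1; omega)

/-- A chain with two monochromatic steps is followed by a geodesic with `t + 3` jumps: one in each
of the `t + 1` pairs of flips, and a second one in each of the two monochromatic steps. -/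
theorem exists_geodesic {f : (Fin (2 * t + 2) → Bool) → Bool} (hf : Respects t f)
    (e : Fin (t + 1) × Bool ≃ Fin (2 * t + 2)) (k₁ k₂ : Fin (t + 1)) (hne : k₁ ≠ k₂)
    (h₁ : f (mid e k₁) = f (mid e (k₁ + 1))) (h₂ : f (mid e k₂) = f (mid e (k₂ + 1))) :
    ∃ P : Fin (2 * t + 2 + 1) → Fin (2 * t + 2) → Bool, IsGeodesic P ∧ P 0 = mid e 0 ∧
      P (Fin.last _) = mid e (t + 1) ∧ t + 3 ≤ jumps f P := by
  set c : Fin (t + 1) → Bool := fun k => f (mid e k) with hc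
  refine ⟨fun j => zig e c j, zig_isGeodesic e c, zig_even e c 0, zig_even e c (t + 1), ?_⟩
  let ev : Fin (t + 1) → Fin (2 * t + 2) := fun k => ⟨2 * k, by omega⟩
  let od : Fin (t + 1) → Fin (2 * t + 2) := fun k => ⟨2 * k + 1, by omega⟩
  have hev : Function.Injective ev := fun a b h => by
    simp only [ev, Fin.mk.injEq] at h
    exact Fin.ext (by omega)
  have hod : od k₁ ≠ od k₂ := fun h => hne <| by
    simp only [od, Fin.mk.injEq] at h
    exact Fin.ext (by omega)
  have hdisj : Disjoint (univ.image ev) {od k₁, od k₂} := by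
    rw [Finset.disjoint_left]
    intro x hx hx'
    obtain ⟨k, -, rfl⟩ := Finset.mem_image.1 hx
    simp only [ev, od, Finset.mem_insert, Finset.mem_singleton, Fin.mk.injEq] at hx'
    omega
  have hcard : (univ.image ev ∪ {od k₁, od k₂}).card = t + 3 := by
    rw [Finset.card_union_of_disjoint hdisj, Finset.card_image_of_injective _ hev,
      Finset.card_pair hod]
    simp
  have hodd : ∀ k : Fin (t + 1), f (mid e k) = f (mid e (k + 1)) →
      f (zig e c (2 * k + 1 + 1)) ≠ f (zig e c (2 * k + 1)) := by
    intro k hk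
    rw [zig_odd_colour hf e k, show 2 * (k : ℕ) + 1 + 1 = 2 * (k + 1) by ring, zig_even, ← hk]
    simp
  rw [← hcard]
  apply Finset.card_le_card
  intro x hx
  rw [Finset.mem_filter]
  refine ⟨Finset.mem_univ _, ?_⟩
  rcases Finset.mem_union.1 hx with hx | hx
  · obtain ⟨k, -, rfl⟩ := Finset.mem_image.1 hx
    change f (zig e c (2 * k + 1)) ≠ f (zig e c (2 * k))
    rw [zig_odd_colour hf e k, zig_even]
    simp
  · rw [Finset.mem_insert, Finset.mem_singleton] at hx
    rcases hx with rfl | rfl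
    · exact hodd k₁ h₁
    · exact hodd k₂ h₂

/-! ### The bounds on `winst` and `inst` -/

/-- A well-ending geodesic with `t + 3` jumps; if the chain runs from colour `0` to colour `1`, the
reversed chain is used. -/
theorem exists_good (ht : 2 ≤ t) {f : (Fin (2 * t + 2) → Bool) → Bool} (hf : Respects t f) :
    ∃ P : Fin (2 * t + 2 + 1) → Fin (2 * t + 2) → Bool, IsGeodesic P ∧ onesCount (P 0) = t + 1 ∧
      (f (P 0) = true ∨ f (P (Fin.last _)) = false) ∧ t + 3 ≤ jumps f P := by
  obtain ⟨e, he⟩ := exists_two_mono ht f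
  obtain ⟨k₁, k₂, hne, h₁, h₂⟩ : ∃ k₁ k₂ : Fin (t + 1), k₁ ≠ k₂ ∧
      f (mid e k₁) = f (mid e (k₁ + 1)) ∧ f (mid e k₂) = f (mid e (k₂ + 1)) := by
    rcases he with ⟨h, h'⟩ | ⟨h, h'⟩ | ⟨h, h'⟩
    · exact ⟨⟨0, by omega⟩, ⟨1, by omega⟩, by simp, h, h'⟩
    · exact ⟨⟨0, by omega⟩, ⟨2, by omega⟩, by simp, h, h'⟩
    · exact ⟨⟨1, by omega⟩, ⟨2, by omega⟩, by simp, h, h'⟩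
  by_cases hend : f (mid e 0) = true ∨ f (mid e (t + 1)) = false
  · obtain ⟨P, hP, hP0, hPl, hj⟩ := exists_geodesic hf e k₁ k₂ hne h₁ h₂
    exact ⟨P, hP, by rw [hP0, onesCount_mid], by rwa [hP0, hPl], hj⟩
  · have hrev : ∀ k : Fin (t + 1), f (mid e k) = f (mid e (k + 1)) →
        f (mid (revEnum e) k.rev) = f (mid (revEnum e) (k.rev + 1)) := by
      intro k hk
      have hlt := k.isLt
      rw [mid_revEnum e _ (by omega), mid_revEnum e _ (by omega), Fin.val_rev,
        show t + 1 - (t + 1 - ((k : ℕ) + 1)) = k + 1 by omega,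
        show t + 1 - (t + 1 - ((k : ℕ) + 1) + 1) = k by omega, hk]
    obtain ⟨P, hP, hP0, hPl, hj⟩ := exists_geodesic hf (revEnum e) k₁.rev k₂.rev
      (fun h => hne (Fin.rev_injective h)) (hrev k₁ h₁) (hrev k₂ h₂)
    refine ⟨P, hP, by rw [hP0, onesCount_mid], Or.inl ?_, hj⟩
    rw [hP0, mid_revEnum e 0 (by omega)]
    push Not at hend
    simpa using hend.2

theorem jumps_le {n : ℕ} (f : (Fin n → Bool) → Bool) (P : Fin (n + 1) → Fin n → Bool) :
    jumps f P ≤ n := by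
  exact (Finset.card_filter_le _ _).trans (by simp)

end Chains

/-- For `t ≥ 2` and `n = 2t+2`: every colouring with `t_f = t` has `winst ≥ t+3`, and
every colouring respecting the balls of radius `t` has `inst ≥ t+3`; that is,
`inst(2t+2,t) ≥ winst(2t+2,t) ≥ t+3`. -/
theorem one_strip (t : ℕ) (ht : 2 ≤ t) :
    (∀ f : (Fin (2 * t + 2) → Bool) → Bool, tfEq f t → t + 3 ≤ winst t f) ∧
    (∀ f : (Fin (2 * t + 2) → Bool) → Bool, Respects t f → t + 3 ≤ inst f) := by
  refine ⟨fun f hf => ?_, fun f hf => ?_⟩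
  · obtain ⟨P, hP, h0, hend, hj⟩ := exists_good ht hf.1
    refine hj.trans (le_csSup ⟨2 * t + 2, ?_⟩ ⟨P, hP, h0, hend, rfl⟩)
    rintro m ⟨Q, -, -, -, rfl⟩
    exact jumps_le f Q
  · obtain ⟨P, hP, -, -, hj⟩ := exists_good ht hf
    refine hj.trans (le_csSup ⟨2 * t + 2, ?_⟩ ⟨P, hP, rfl⟩)
    rintro m ⟨Q, -, rfl⟩
    exact jumps_le f Q
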